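/- Let q = p^h with p an odd prime. Let A be the set of points {⟨(1,x,x^p)⟩ : x ∈ F_q} of PG(2,q), and let N be the set of points on the line X = 0 (the points ⟨(0,y,z)⟩) that are not of the form ⟨(0,x,x^p)⟩ for any nonzero x ∈ F_q. Then A ∪ N is a set without tangents in PG(2,q) of size 2q + 1 − (q−1)/(p−1). -/

import Mathlib

/-!
`PG(2,F)`: points are the 1-dimensional subspaces of `F^3` (modelled as the
projectivization of `Fin 3 → F`), lines are the 2-dimensional subspaces.
-/

variable {F : Type*} [Field F]

/-- The points of `PG(2,F)`: 1-dimensional subspaces of `F^3`. -/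
abbrev PGPoint (F : Type*) [Field F] := Projectivization F (Fin 3 → F)

/-- A line of `PG(2,F)` is a 2-dimensional subspace of `F^3`. -/
def IsProjLine (F : Type*) [Field F] (L : Submodule F (Fin 3 → F)) : Prop :=
  Module.finrank F L = 2

/-- The set of projective points lying on the subspace `L`. -/
def pointsOn (L : Submodule F (Fin 3 → F)) : Set (PGPoint F) :=
  {P | P.submodule ≤ L}

/-- `S` is a set without tangents: no line of `PG(2,F)` meets `S` in exactly one point. -/
def NoTangents (S : Set (PGPoint F)) : Prop :=
  ∀ L : Submodule F (Fin 3 → F), IsProjLine F L →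
    ¬ (∃! P : PGPoint F, P ∈ S ∩ pointsOn L)

/-- The line of `PG(2,F)` with equation `X = 0`. -/
def lineX0 (F : Type*) [Field F] : Submodule F (Fin 3 → F) :=
  LinearMap.ker (LinearMap.proj 0 : (Fin 3 → F) →ₗ[F] F)

open Projectivization

theorem mk_mem_pointsOn {L : Submodule F (Fin 3 → F)} {v : Fin 3 → F} (hv : v ≠ 0) :
    mk F v hv ∈ pointsOn L ↔ v ∈ L := by
  simp [pointsOn, submodule_mk, Submodule.span_singleton_le_iff_mem]

theorem mk_mem_lineX0 {v : Fin 3 → F} (hv : v ≠ 0) :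
    mk F v hv ∈ pointsOn (lineX0 F) ↔ v 0 = 0 := by
  simp [mk_mem_pointsOn, lineX0]

theorem submodule_eq_span_iff {v w : Fin 3 → F} (hw : w ≠ 0) (P : PGPoint F) (h : v = w) :
    P.submodule = Submodule.span F {v} ↔ P = mk F w hw := by
  rw [h, ← submodule_mk w hw]
  exact submodule_injective.eq_iff

/-- The point `⟨(1,y,z)⟩`. -/
def affinePoint (y z : F) : PGPoint F :=
  mk F ![1, y, z] fun h => one_ne_zero (congrFun h 0)

/-- The point `⟨(0,1,m)⟩`. -/
def slopePoint (m : F) : PGPoint F :=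
  mk F ![0, 1, m] fun h => one_ne_zero (congrFun h 1)

/-- The point `⟨(0,0,1)⟩`. -/
def verticalPoint (F : Type*) [Field F] : PGPoint F :=
  mk F ![0, 0, 1] fun h => one_ne_zero (congrFun h 2)

theorem affinePoint_inj {y z y' z' : F} :
    affinePoint y z = affinePoint y' z' ↔ y = y' ∧ z = z' := by
  constructor
  · intro h
    obtain ⟨a, ha⟩ := (mk_eq_mk_iff' F _ _ _ _).mp h
    have h0 : a = 1 := by simpa using congrFun ha 0
    have h1 := congrFun ha 1
    have h2 := congrFun ha 2
    subst h0
    simp at h1 h2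
    exact ⟨h1.symm, h2.symm⟩
  · rintro ⟨rfl, rfl⟩
    rfl

theorem slopePoint_injective : Function.Injective (slopePoint : F → PGPoint F) := by
  intro m m' h
  obtain ⟨a, ha⟩ := (mk_eq_mk_iff' F _ _ _ _).mp h
  have h0 : a = 1 := by simpa using congrFun ha 1
  have h1 := congrFun ha 2
  subst h0
  simpa using h1.symm

theorem slopePoint_ne_verticalPoint (m : F) : slopePoint m ≠ verticalPoint F := by
  intro h
  obtain ⟨a, ha⟩ := (mk_eq_mk_iff' F _ _ _ _).mp h
  simpa using congrFun ha 1

theorem affinePoint_notMem_lineX0 (y z : F) : affinePoint y z ∉ pointsOn (lineX0 F) := by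
  simp [affinePoint, mk_mem_lineX0]

theorem slopePoint_mem_lineX0 (m : F) : slopePoint m ∈ pointsOn (lineX0 F) := by
  simp [slopePoint, mk_mem_lineX0]

theorem verticalPoint_mem_lineX0 : verticalPoint F ∈ pointsOn (lineX0 F) := by
  simp [verticalPoint, mk_mem_lineX0]

theorem pointsOn_lineX0 :
    pointsOn (lineX0 F) = insert (verticalPoint F) (Set.range slopePoint) := by
  ext P
  constructor
  · induction P using Projectivization.ind with | _ v hv
    intro h
    have h0 : v 0 = 0 := (mk_mem_lineX0 hv).mp h
    by_cases h1 : v 1 = 0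
    · refine Or.inl ((mk_eq_mk_iff' F _ _ _ _).mpr ⟨v 2, ?_⟩)
      ext i
      fin_cases i <;> simp [h0, h1]
    · refine Or.inr ⟨v 2 / v 1, ((mk_eq_mk_iff' F _ _ _ _).mpr ⟨v 1, ?_⟩).symm⟩
      ext i
      fin_cases i <;> simp [h0, mul_div_cancel₀ _ h1]
  · rintro (rfl | ⟨m, rfl⟩)
    · exact verticalPoint_mem_lineX0
    · exact slopePoint_mem_lineX0 m

/-- The affine points of the graph of `x ↦ x ^ p`. -/
def powGraph (F : Type*) [Field F] (p : ℕ) : Set (PGPoint F) :=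
  {P | ∃ x : F, P.submodule = Submodule.span F {![1, x, x ^ p]}}

/-- The points `⟨(0,x,x^p)⟩` with `x ≠ 0`. -/
def powDirections (F : Type*) [Field F] (p : ℕ) : Set (PGPoint F) :=
  {P | ∃ x : F, x ≠ 0 ∧ P.submodule = Submodule.span F {![0, x, x ^ p]}}

theorem powGraph_eq_range (p : ℕ) :
    powGraph F p = Set.range fun x : F => affinePoint x (x ^ p) := by
  ext P
  refine exists_congr fun x => ?_
  rw [eq_comm (b := P)]
  exact submodule_eq_span_iff _ P rfl

theorem powDirections_eq_range {p : ℕ} (hp : 1 ≤ p) :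
    powDirections F p = Set.range fun u : Fˣ => slopePoint ((u : F) ^ (p - 1)) := by
  have key (x : F) (hx : x ≠ 0) (P : PGPoint F) :
      P.submodule = Submodule.span F {![0, x, x ^ p]} ↔ slopePoint (x ^ (p - 1)) = P := by
    have hv : ![0, x, x ^ p] ≠ 0 := fun h => hx (congrFun h 1)
    have h : slopePoint (x ^ (p - 1)) = mk F ![0, x, x ^ p] hv := by
      refine ((mk_eq_mk_iff' F _ _ _ _).mpr ⟨x, ?_⟩).symm
      ext i
      fin_cases i <;> simp [mul_pow_sub_one (by omega : p ≠ 0)]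
    rw [submodule_eq_span_iff hv P rfl, h, eq_comm]
  ext P
  constructor
  · rintro ⟨x, hx, h⟩
    exact ⟨Units.mk0 x hx, (key x hx P).mp h⟩
  · rintro ⟨u, h⟩
    exact ⟨u, u.ne_zero, (key u u.ne_zero P).mpr h⟩

theorem slopePoint_mem_powDirections {p : ℕ} (hp : 1 ≤ p) (m : F) :
    slopePoint m ∈ powDirections F p ↔ ∃ t : F, t ≠ 0 ∧ t ^ p = m * t := by
  rw [powDirections_eq_range hp]
  constructor
  · rintro ⟨u, hu⟩
    refine ⟨u, u.ne_zero, ?_⟩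
    rw [← slopePoint_injective hu, pow_sub_one_mul (by omega)]
  · rintro ⟨t, ht, h⟩
    refine ⟨Units.mk0 t ht, congrArg slopePoint (mul_right_cancel₀ ht ?_)⟩
    rw [Units.val_mk0, pow_sub_one_mul (by omega), h]

theorem verticalPoint_notMem_powDirections {p : ℕ} (hp : 1 ≤ p) :
    verticalPoint F ∉ powDirections F p := by
  rw [powDirections_eq_range hp]
  rintro ⟨u, hu⟩
  exact slopePoint_ne_verticalPoint _ hu

/-- Every line of the plane is given by a nonzero linear equation. -/
theorem IsProjLine.exists_equation {L : Submodule F (Fin 3 → F)} (hL : IsProjLine F L) :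
    ∃ a b c : F, (a ≠ 0 ∨ b ≠ 0 ∨ c ≠ 0) ∧
      ∀ x y z : F, ![x, y, z] ∈ L ↔ a * x + b * y + c * z = 0 := by
  have hlt : L < ⊤ := by
    refine lt_top_iff_ne_top.mpr fun h => ?_
    have hL' : Module.finrank F L = 2 := hL
    rw [h, finrank_top, Module.finrank_fin_fun] at hL'
    omega
  obtain ⟨f, hf, hle⟩ := Submodule.exists_le_ker_of_lt_top L hlt
  have hker : L = LinearMap.ker f := by
    refine Submodule.eq_of_le_of_finrank_eq hle ?_
    have h := Module.Dual.finrank_ker_add_one_of_ne_zero hf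
    rw [Module.finrank_fin_fun] at h
    have hL' : Module.finrank F L = 2 := hL
    omega
  have happ (v : Fin 3 → F) :
      f v = f (Pi.single 0 1) * v 0 + f (Pi.single 1 1) * v 1 + f (Pi.single 2 1) * v 2 := by
    have hv : v = v 0 • Pi.single 0 1 + v 1 • Pi.single 1 1 + v 2 • Pi.single 2 1 := by
      ext i
      fin_cases i <;> simp
    conv_lhs => rw [hv]
    simp only [map_add, map_smul, smul_eq_mul, mul_comm]
  refine ⟨f (Pi.single 0 1), f (Pi.single 1 1), f (Pi.single 2 1), ?_, fun x y z => ?_⟩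
  · by_contra! h
    exact hf (LinearMap.ext fun v => by rw [happ, h.1, h.2.1, h.2.2]; simp)
  · rw [hker, LinearMap.mem_ker, happ]
    rfl

theorem noTangents_powGraph_union [Finite F] (p : ℕ) [Fact p.Prime] [CharP F p] :
    NoTangents (powGraph F p ∪ (pointsOn (lineX0 F) \ powDirections F p)) := by
  have hp1 : 1 ≤ p := (Fact.out : p.Prime).one_le
  have hp0 : p ≠ 0 := by omega
  rintro L hL ⟨P, ⟨hPS, hPL⟩, huniq⟩
  obtain ⟨a, b, c, hne, hmem⟩ := hL.exists_equation
  have huniq' {Q R : PGPoint F}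
      (hQ : Q ∈ powGraph F p ∪ (pointsOn (lineX0 F) \ powDirections F p)) (hQL : Q ∈ pointsOn L)
      (hR : R ∈ powGraph F p ∪ (pointsOn (lineX0 F) \ powDirections F p)) (hRL : R ∈ pointsOn L) :
      Q = R := (huniq Q ⟨hQ, hQL⟩).trans (huniq R ⟨hR, hRL⟩).symm
  have graph_mem (x : F) :
      affinePoint x (x ^ p) ∈ powGraph F p ∪ (pointsOn (lineX0 F) \ powDirections F p) :=
    Or.inl (by rw [powGraph_eq_range]; exact ⟨x, rfl⟩)
  have vertical_mem :
      verticalPoint F ∈ powGraph F p ∪ (pointsOn (lineX0 F) \ powDirections F p) :=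
    Or.inr ⟨verticalPoint_mem_lineX0, verticalPoint_notMem_powDirections hp1⟩
  have affine_on (y z : F) : affinePoint y z ∈ pointsOn L ↔ a + b * y + c * z = 0 := by
    rw [affinePoint, mk_mem_pointsOn, hmem, mul_one]
  have slope_on (m : F) : slopePoint m ∈ pointsOn L ↔ b + c * m = 0 := by
    rw [slopePoint, mk_mem_pointsOn, hmem, mul_zero, mul_one, zero_add]
  have vertical_on : verticalPoint F ∈ pointsOn L ↔ c = 0 := by
    rw [verticalPoint, mk_mem_pointsOn, hmem]
    simp
  by_cases hc : c = 0
  · by_cases hb : b = 0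
    · have hslope : slopePoint (0 : F) ∉ powDirections F p := by
        rw [slopePoint_mem_powDirections hp1]
        rintro ⟨t, ht, h⟩
        rw [zero_mul] at h
        exact ht (pow_eq_zero_iff hp0 |>.mp h)
      exact slopePoint_ne_verticalPoint 0 (huniq'
        (Or.inr ⟨slopePoint_mem_lineX0 0, hslope⟩) ((slope_on 0).mpr (by simp [hb]))
        vertical_mem (vertical_on.mpr hc))
    · have h := huniq' (graph_mem (-a / b)) ((affine_on _ _).mpr (by rw [hc]; field_simp; ring))
        vertical_mem (vertical_on.mpr hc)
      exact affinePoint_notMem_lineX0 _ _ (h ▸ verticalPoint_mem_lineX0)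
  · by_cases hdir : slopePoint (-b / c) ∈ powDirections F p
    · obtain ⟨t, ht, htp⟩ := (slopePoint_mem_powDirections hp1 _).mp hdir
      have hPA : P ∈ powGraph F p := by
        refine hPS.resolve_right ?_
        rw [pointsOn_lineX0]
        rintro ⟨rfl | ⟨m, rfl⟩, hPD⟩
        · exact hc (vertical_on.mp hPL)
        · have hm : m = -b / c := by
            rw [eq_div_iff hc]
            linear_combination (slope_on m).mp hPL
          exact hPD (hm ▸ hdir)
      rw [powGraph_eq_range] at hPA
      obtain ⟨x, rfl⟩ := hPA
      have hx := (affine_on _ _).mp hPL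
      have hxt : affinePoint (x + t) ((x + t) ^ p) ∈ pointsOn L := by
        rw [affine_on, add_pow_char, htp]
        field_simp
        linear_combination hx
      have h := (affinePoint_inj.mp (huniq' (graph_mem (x + t)) hxt (graph_mem x) hPL)).1
      exact ht (by simpa using h)
    · let φ : F →+ F :=
        AddMonoidHom.mulLeft b + (AddMonoidHom.mulLeft c).comp (frobenius F p : F →+ F)
      have hφ (x : F) : φ x = b * x + c * x ^ p := rfl
      have hinj : Function.Injective φ := by
        refine (injective_iff_map_eq_zero φ).mpr fun t h => ?_
        by_contra ht
        refine hdir ((slopePoint_mem_powDirections hp1 _).mpr ⟨t, ht, ?_⟩)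
        rw [hφ] at h
        field_simp
        linear_combination h
      obtain ⟨x, hx⟩ := Finite.surjective_of_injective hinj (-a)
      rw [hφ] at hx
      have h := huniq' (graph_mem x) ((affine_on _ _).mpr (by linear_combination hx))
        (Or.inr ⟨slopePoint_mem_lineX0 _, hdir⟩)
        ((slope_on _).mpr (by field_simp; ring))
      exact affinePoint_notMem_lineX0 _ _ (h ▸ slopePoint_mem_lineX0 _)

theorem ncard_powGraph (p : ℕ) : (powGraph F p).ncard = Nat.card F := by
  rw [powGraph_eq_range, Set.ncard_range_of_injective]
  exact fun x y h => (affinePoint_inj.mp h).1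

theorem ncard_pointsOn_lineX0 [Finite F] : (pointsOn (lineX0 F)).ncard = Nat.card F + 1 := by
  rw [pointsOn_lineX0, Set.ncard_insert_of_notMem,
    Set.ncard_range_of_injective slopePoint_injective]
  rintro ⟨m, hm⟩
  exact slopePoint_ne_verticalPoint m hm

theorem ncard_powDirections [Finite F] {p : ℕ} (hp : 1 ≤ p) :
    (powDirections F p).ncard = (Nat.card F - 1) / (Nat.card F - 1).gcd (p - 1) := by
  have h : powDirections F p =
      Set.range fun u : (powMonoidHom (p - 1) : Fˣ →* Fˣ).range => slopePoint ((u : Fˣ) : F) := by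
    rw [powDirections_eq_range hp]
    ext P
    constructor
    · rintro ⟨u, rfl⟩
      exact ⟨⟨u ^ (p - 1), u, rfl⟩, by simp⟩
    · rintro ⟨⟨_, u, rfl⟩, rfl⟩
      exact ⟨u, by simp⟩
  rw [h, Set.ncard_range_of_injective, IsCyclic.card_powMonoidHom_range, Nat.card_units]
  exact slopePoint_injective.comp (Units.val_injective.comp Subtype.val_injective)

theorem ncard_powGraph_union [Finite F] {p : ℕ} (hp : 1 ≤ p) :
    (powGraph F p ∪ (pointsOn (lineX0 F) \ powDirections F p)).ncard =
      2 * Nat.card F + 1 - (Nat.card F - 1) / (Nat.card F - 1).gcd (p - 1) := by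
  have hsub : powDirections F p ⊆ pointsOn (lineX0 F) := by
    rw [powDirections_eq_range hp]
    rintro _ ⟨u, rfl⟩
    exact slopePoint_mem_lineX0 _
  have hdisj : Disjoint (powGraph F p) (pointsOn (lineX0 F) \ powDirections F p) := by
    rw [Set.disjoint_left, powGraph_eq_range]
    rintro _ ⟨x, rfl⟩ h
    exact affinePoint_notMem_lineX0 _ _ h.1
  have hle := Nat.div_le_self (Nat.card F - 1) ((Nat.card F - 1).gcd (p - 1))
  rw [Set.ncard_union_eq hdisj, Set.ncard_sdiff hsub, ncard_powGraph, ncard_pointsOn_lineX0,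
    ncard_powDirections hp]
  omega

/-- for `q = p^h`, `p` an odd prime, the set
`A = {⟨(1,x,x^p)⟩ : x ∈ F_q}` together with the set `N` of points of the line
`X = 0` not of the form `⟨(0,x,x^p)⟩` (`x ≠ 0`) is a set without tangents of
size `2q + 1 - (q-1)/(p-1)`. -/
theorem stmt_16 [Fintype F] (p h : ℕ) (hp : p.Prime) (hodd : Odd p) (hh : 1 ≤ h)
    (hcard : Fintype.card F = p ^ h) :
    NoTangents
      ({P : PGPoint F | ∃ x : F, P.submodule = Submodule.span F {![1, x, x ^ p]}} ∪
        (pointsOn (lineX0 F) \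
          {P : PGPoint F | ∃ x : F, x ≠ 0 ∧ P.submodule = Submodule.span F {![0, x, x ^ p]}})) ∧
    ({P : PGPoint F | ∃ x : F, P.submodule = Submodule.span F {![1, x, x ^ p]}} ∪
        (pointsOn (lineX0 F) \
          {P : PGPoint F | ∃ x : F, x ≠ 0 ∧ P.submodule = Submodule.span F {![0, x, x ^ p]}})).ncard
      = 2 * p ^ h + 1 - (p ^ h - 1) / (p - 1) := by
  have : Fact p.Prime := ⟨hp⟩
  have : CharP F p := charP_of_card_eq_prime_pow hcard
  refine ⟨noTangents_powGraph_union p, (ncard_powGraph_union hp.one_le).trans ?_⟩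
  have hdvd : p - 1 ∣ p ^ h - 1 := by simpa using Nat.sub_dvd_pow_sub_pow p 1 h
  rw [Nat.card_eq_fintype_card, hcard, Nat.gcd_eq_right hdvd]
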